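/- Let n ≥ 1 and g ≥ 1 be integers and ζ ∈ ℂ a primitive n-th root of unity. Let U ⊆ (M_n(ℂ))^{2g} be the open set of 2g-tuples of invertible matrices and μ: U → M_n(ℂ) the map μ(A_1,B_1,…,A_g,B_g) = [A_1,B_1][A_2,B_2]⋯[A_g,B_g]. Let s ∈ U be a point with μ(s) = ζ·I_n. Then the (Fréchet) derivative of μ at s is a ℂ-linear map (M_n(ℂ))^{2g} → M_n(ℂ) whose range is exactly the subspace {M ∈ M_n(ℂ) : tr(ζ⁻¹M) = 0}; in particular it is surjective onto this tangent space of SL(n,ℂ) at ζ·I_n. -/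

import Mathlib

attribute [local instance]
  Matrix.linftyOpNormedAddCommGroup Matrix.linftyOpNormedRing Matrix.linftyOpNormedAlgebra

/-- The map `μ(A₁,B₁,…,A_g,B_g) = [A₁,B₁]⋯[A_g,B_g]` on `2g`-tuples of `n×n` complex
matrices (inverses taken in the sense of `Matrix.inv`, which is the genuine inverse at
tuples of invertible matrices). -/
noncomputable def muMap (n g : ℕ) :
    ((Fin g → Matrix (Fin n) (Fin n) ℂ) × (Fin g → Matrix (Fin n) (Fin n) ℂ)) →
      Matrix (Fin n) (Fin n) ℂ :=
  fun p => (List.ofFn fun i => p.1 i * p.2 i * (p.1 i)⁻¹ * (p.2 i)⁻¹).prod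

/-!
The argument computes the annihilator of the range of the derivative under the trace form. Write
tangent vectors at `s = (A, B)` as `(pᵢ Aᵢ, qᵢ Bᵢ)` and the derivative of `μ` as `ω(p, q) μ(s)`. The
contribution of the `i`-th commutator to `ω` is its own right logarithmic derivative conjugated by
the product of the preceding commutators. Hence if `X` is trace-orthogonal to the range of `ω`,
induction on `i` shows that `X` commutes with every `Aᵢ` and `Bᵢ`: once it commutes with the
preceding ones, the conjugation does not affect the pairing with `X`.

The `Aᵢ` and `Bᵢ` act irreducibly on `ℂⁿ`: on an invariant subspace `W` the determinant is trivial
on products of commutators, so `ζ ^ dim W = 1` and `n ∣ dim W`. By Schur's lemma `X` is a scalar, so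
the range of `ω` is the space of matrices of trace zero.
-/

open scoped commutatorElement

section LogFDeriv

variable {𝕜 E R : Type*} [NontriviallyNormedField 𝕜] [NormedAddCommGroup E] [NormedSpace 𝕜 E]
  [NormedRing R] [NormedAlgebra 𝕜 R]

variable (𝕜) in
/-- Conjugation `r ↦ u r u⁻¹` by a unit of a normed algebra, as a continuous linear map. -/
noncomputable def conjCLM (u : Rˣ) : R →L[𝕜] R :=
  ContinuousLinearMap.mulLeftRight 𝕜 R u ↑u⁻¹

@[simp]
lemma conjCLM_apply (u : Rˣ) (r : R) : conjCLM 𝕜 u r = u * r * ↑u⁻¹ := rfl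

/-- The function `f` takes the value `u`, a unit, at `x`, and is differentiable there with right
logarithmic derivative `ω`, that is, `f'(x) v = ω v * u`. -/
def HasLogFDerivAt (f : E → R) (ω : E →L[𝕜] R) (u : Rˣ) (x : E) : Prop :=
  f x = u ∧ HasFDerivAt f ((ContinuousLinearMap.mul 𝕜 R).flip u ∘L ω) x

namespace HasLogFDerivAt

variable {f h : E → R} {ω η : E →L[𝕜] R} {u v : Rˣ} {x : E}

lemma of_hasFDerivAt {f' : E →L[𝕜] R} (hf : HasFDerivAt f f' x) (hu : f x = u) :
    HasLogFDerivAt f ((ContinuousLinearMap.mul 𝕜 R).flip ↑u⁻¹ ∘L f') u x :=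
  ⟨hu, hf.congr_fderiv <| by ext; simp⟩

lemma fderiv_apply (hf : HasLogFDerivAt f ω u x) (y : E) : fderiv 𝕜 f x y = ω y * u := by
  rw [hf.2.fderiv]
  rfl

lemma mul (hf : HasLogFDerivAt f ω u x) (hh : HasLogFDerivAt h η v x) :
    HasLogFDerivAt (fun y => f y * h y) (ω + conjCLM 𝕜 u ∘L η) (u * v) x := by
  refine ⟨by simp [hf.1, hh.1], (hf.2.mul' hh.2).congr_fderiv ?_⟩
  ext y
  simp [hf.1, hh.1, mul_assoc, add_comm]

lemma ringInverse [HasSummableGeomSeries R] (hf : HasLogFDerivAt f ω u x) :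
    HasLogFDerivAt (fun y => Ring.inverse (f y)) (-(conjCLM 𝕜 u⁻¹ ∘L ω)) u⁻¹ x := by
  have hinv := hasFDerivAt_ringInverse (𝕜 := 𝕜) u
  rw [← hf.1] at hinv
  refine ⟨by simp [hf.1], (hinv.comp x hf.2).congr_fderiv ?_⟩
  ext y
  simp [mul_assoc]

lemma commutator [HasSummableGeomSeries R]
    (hf : HasLogFDerivAt f ω u x) (hh : HasLogFDerivAt h η v x) :
    HasLogFDerivAt (fun y => f y * h y * Ring.inverse (f y) * Ring.inverse (h y))
      (ω + conjCLM 𝕜 u ∘L η - conjCLM 𝕜 (u * v * u⁻¹) ∘L ω - conjCLM 𝕜 ⁅u, v⁆ ∘L η) ⁅u, v⁆ x := by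
  rw [commutatorElement_def]
  convert ((hf.mul hh).mul hf.ringInverse).mul hh.ringInverse using 1
  ext y
  simp [mul_assoc, sub_eq_add_neg]

lemma prod_ofFn {g : ℕ} {f : Fin g → E → R} {ω : Fin g → E →L[𝕜] R} {u : Fin g → Rˣ}
    (hf : ∀ i, HasLogFDerivAt (f i) (ω i) (u i) x) :
    HasLogFDerivAt (fun y => (List.ofFn fun i => f i y).prod)
      (∑ i, conjCLM 𝕜 (Fin.partialProd u i.castSucc) ∘L ω i) (List.ofFn u).prod x := by
  induction g with
  | zero => exact ⟨by simp, (hasFDerivAt_const 1 x).congr_fderiv <| by simp⟩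
  | succ g ih =>
    simp only [List.ofFn_succ, List.prod_cons]
    convert (hf 0).mul (ih fun i => hf i.succ) using 1
    ext y
    simp [Fin.sum_univ_succ, Fin.partialProd_succ', Fin.castSucc_succ, Fin.tail_def, mul_assoc]

end HasLogFDerivAt

end LogFDeriv

section Group

variable {G : Type*} [Group G] {S : Subgroup G}

lemma mem_and_mem_of_conj_mem_of_commutatorElement_mul_inv_mem {u v : G}
    (hconj : u * v * u⁻¹ ∈ S) (hcomm : ⁅u, v⁆ * u⁻¹ ∈ S) : u ∈ S ∧ v ∈ S := by
  -- `⁅u, v⁆ * u⁻¹ = (u * v * u⁻¹) * (u * v)⁻¹`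
  have huv : u * v ∈ S := by
    simpa [commutatorElement_def, mul_assoc] using S.mul_mem (S.inv_mem hcomm) hconj
  have hu : u ∈ S := by simpa [mul_assoc] using S.mul_mem (S.inv_mem hconj) huv
  exact ⟨hu, (S.mul_mem_cancel_left hu).1 huv⟩

lemma prod_ofFn_commutator_mem {g : ℕ} {a b : Fin g → G}
    (h : ∀ i, a i ∈ S ∧ b i ∈ S) : (List.ofFn fun i => ⁅a i, b i⁆).prod ∈ ⁅S, S⁆ :=
  list_prod_mem <| List.forall_mem_ofFn_iff.2 fun i =>
    Subgroup.commutator_mem_commutator (h i).1 (h i).2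

end Group

section Variation

variable {R : Type*} [Ring R]

/-- The right logarithmic derivative of `(x, y) ↦ ⁅x, y⁆` at `(u, v)` in the direction
`(p * u, q * v)`. -/
def commutatorVariation (u v : Rˣ) (p q : R) : R :=
  p + u * q * ↑u⁻¹ - ↑(u * v * u⁻¹) * p * ↑(u * v * u⁻¹)⁻¹ - ↑⁅u, v⁆ * q * ↑⁅u, v⁆⁻¹

/-- The right logarithmic derivative of `(x, y) ↦ ⁅x₁, y₁⁆ ⋯ ⁅x_g, y_g⁆` at `(a, b)` in the
direction `(p * a, q * b)`. -/
def commutatorProdVariation {g : ℕ} (a b : Fin g → Rˣ) (p q : Fin g → R) : R :=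
  ∑ i, (Fin.partialProd (fun j => ⁅a j, b j⁆) i.castSucc : Rˣ) *
    commutatorVariation (a i) (b i) (p i) (q i) *
    ↑(Fin.partialProd (fun j => ⁅a j, b j⁆) i.castSucc)⁻¹

lemma commutatorVariation_zero (u v : Rˣ) : commutatorVariation u v (0 : R) 0 = 0 := by
  simp [commutatorVariation]

/-- The units commuting with an element of a ring, as a subgroup of the group of units. -/
def unitsCentralizer (X : R) : Subgroup Rˣ :=
  (Submonoid.centralizer {X}).units

lemma mem_unitsCentralizer {X : R} {u : Rˣ} : u ∈ unitsCentralizer X ↔ Commute X u := by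
  simp only [unitsCentralizer, Submonoid.mem_units_iff, Submonoid.mem_centralizer_iff,
    Set.mem_singleton_iff, forall_eq]
  exact ⟨fun h => h.1, fun h => ⟨h, h.units_inv_right⟩⟩

lemma units_inv_mul_mul_eq_self_iff {X : R} {u : Rˣ} :
    ↑u⁻¹ * X * u = X ↔ u ∈ unitsCentralizer X := by
  rw [mem_unitsCentralizer, mul_assoc, Units.inv_mul_eq_iff_eq_mul]
  exact Iff.rfl

section SymmetricFunctional

variable {A : Type*} [AddCommGroup A] {τ : R →+ A}

lemma map_mul_conj (hτ : ∀ x y, τ (x * y) = τ (y * x)) (X r : R) (u : Rˣ) :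
    τ (X * (u * r * ↑u⁻¹)) = τ (↑u⁻¹ * X * u * r) := by
  rw [← mul_assoc, hτ]
  simp only [mul_assoc]

lemma map_mul_commutatorVariation (hτ : ∀ x y, τ (x * y) = τ (y * x)) (X p q : R) (u v : Rˣ) :
    τ (X * commutatorVariation u v p q) =
      τ ((X - ↑(u * v * u⁻¹)⁻¹ * X * ↑(u * v * u⁻¹)) * p) +
        τ ((↑u⁻¹ * X * u - ↑⁅u, v⁆⁻¹ * X * ↑⁅u, v⁆) * q) := by
  simp only [commutatorVariation, mul_sub, mul_add, sub_mul, map_sub, map_add, map_mul_conj hτ]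
  abel

lemma forall_map_mul_commutatorVariation_eq_zero_iff (hτ : ∀ x y, τ (x * y) = τ (y * x))
    (hτ₀ : ∀ x, (∀ y, τ (x * y) = 0) → x = 0) {X : R} {u v : Rˣ} :
    (∀ p q, τ (X * commutatorVariation u v p q) = 0) ↔
      u ∈ unitsCentralizer X ∧ v ∈ unitsCentralizer X := by
  set S := unitsCentralizer X
  simp only [map_mul_commutatorVariation hτ]
  set w := u * v * u⁻¹
  constructor
  · intro h
    have hwS : w ∈ S := units_inv_mul_mul_eq_self_iff.1 <| .symm <| sub_eq_zero.1 <|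
      hτ₀ _ fun p => by simpa using h p 0
    have hcuS : ⁅u, v⁆ * u⁻¹ ∈ S := by
      have hconj : ↑u⁻¹ * X * ↑u = ↑⁅u, v⁆⁻¹ * X * ↑⁅u, v⁆ := sub_eq_zero.1 <|
        hτ₀ _ fun q => by simpa using h 0 q
      rw [← units_inv_mul_mul_eq_self_iff]
      calc (↑(⁅u, v⁆ * u⁻¹)⁻¹ * X * ↑(⁅u, v⁆ * u⁻¹) : R)
          = u * (↑⁅u, v⁆⁻¹ * X * ↑⁅u, v⁆) * ↑u⁻¹ := by
            simp only [mul_inv_rev, inv_inv, Units.val_mul, mul_assoc]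
        _ = X := by
            rw [← hconj]
            simp [mul_assoc]
    exact mem_and_mem_of_conj_mem_of_commutatorElement_mul_inv_mem hwS hcuS
  · rintro ⟨hu, hv⟩ p q
    have hwS : w ∈ S := S.mul_mem (S.mul_mem hu hv) (S.inv_mem hu)
    have hcS : ⁅u, v⁆ ∈ S := S.mul_mem hwS (S.inv_mem hv)
    simp only [units_inv_mul_mul_eq_self_iff.2 hu, units_inv_mul_mul_eq_self_iff.2 hwS,
      units_inv_mul_mul_eq_self_iff.2 hcS, sub_self, zero_mul, map_zero, add_zero]

lemma map_mul_commutatorProdVariation (hτ : ∀ x y, τ (x * y) = τ (y * x)) {g : ℕ} (X : R)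
    (a b : Fin g → Rˣ) (p q : Fin g → R) :
    τ (X * commutatorProdVariation a b p q) =
      ∑ i, τ (↑(Fin.partialProd (fun j => ⁅a j, b j⁆) i.castSucc)⁻¹ * X *
        ↑(Fin.partialProd (fun j => ⁅a j, b j⁆) i.castSucc) *
          commutatorVariation (a i) (b i) (p i) (q i)) := by
  simp only [commutatorProdVariation, Finset.mul_sum, map_sum, map_mul_conj hτ]

lemma map_mul_commutatorProdVariation_single (hτ : ∀ x y, τ (x * y) = τ (y * x)) {g : ℕ} {X : R}
    {a b : Fin g → Rˣ} {i : Fin g}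
    (hi : Fin.partialProd (fun j => ⁅a j, b j⁆) i.castSucc ∈ unitsCentralizer X) (p q : R) :
    τ (X * commutatorProdVariation a b (Pi.single i p) (Pi.single i q)) =
      τ (X * commutatorVariation (a i) (b i) p q) := by
  rw [map_mul_commutatorProdVariation hτ, Finset.sum_eq_single_of_mem i (Finset.mem_univ i)]
  · simp only [Pi.single_eq_same, units_inv_mul_mul_eq_self_iff.2 hi]
  · intro j _ hji
    simp [Pi.single_eq_of_ne hji, commutatorVariation_zero]

lemma forall_map_mul_commutatorProdVariation_eq_zero_iff (hτ : ∀ x y, τ (x * y) = τ (y * x))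
    (hτ₀ : ∀ x, (∀ y, τ (x * y) = 0) → x = 0) {g : ℕ} {X : R} {a b : Fin g → Rˣ} :
    (∀ p q, τ (X * commutatorProdVariation a b p q) = 0) ↔
      ∀ i, a i ∈ unitsCentralizer X ∧ b i ∈ unitsCentralizer X := by
  set S := unitsCentralizer X
  have partialProd_mem (k : Fin (g + 1))
      (h : ∀ i : Fin g, Fin.partialProd (fun j => ⁅a j, b j⁆) i.castSucc ∈ S → a i ∈ S ∧ b i ∈ S) :
      Fin.partialProd (fun j => ⁅a j, b j⁆) k ∈ S := by
    induction k using Fin.induction with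
    | zero => simp [S.one_mem]
    | succ i hi =>
      rw [Fin.partialProd_succ]
      exact S.mul_mem hi (S.commutator_le_self
        (Subgroup.commutator_mem_commutator (h i hi).1 (h i hi).2))
  constructor
  · intro h
    have mem_of_partialProd_mem (i : Fin g)
        (hi : Fin.partialProd (fun j => ⁅a j, b j⁆) i.castSucc ∈ S) : a i ∈ S ∧ b i ∈ S :=
      (forall_map_mul_commutatorVariation_eq_zero_iff hτ hτ₀).1 fun p q => by
        rw [← map_mul_commutatorProdVariation_single hτ hi, h]
    exact fun i => mem_of_partialProd_mem i (partialProd_mem _ mem_of_partialProd_mem)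
  · intro h p q
    rw [map_mul_commutatorProdVariation hτ]
    refine Finset.sum_eq_zero fun i _ => ?_
    rw [units_inv_mul_mul_eq_self_iff.2 (partialProd_mem _ fun j _ => h j)]
    exact (forall_map_mul_commutatorVariation_eq_zero_iff hτ hτ₀).2 (h i) _ _

lemma forall_map_mul_eq_zero_iff_of_eq_commutatorProdVariation
    (hτ : ∀ x y, τ (x * y) = τ (y * x)) (hτ₀ : ∀ x, (∀ y, τ (x * y) = 0) → x = 0)
    {g : ℕ} {X : R} {a b : Fin g → Rˣ} {ω : (Fin g → R) × (Fin g → R) → R}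
    (hω : ∀ p q, ω (fun i => p i * a i, fun i => q i * b i) = commutatorProdVariation a b p q) :
    (∀ v, τ (X * ω v) = 0) ↔ ∀ i, a i ∈ unitsCentralizer X ∧ b i ∈ unitsCentralizer X := by
  rw [← forall_map_mul_commutatorProdVariation_eq_zero_iff hτ hτ₀]
  simp only [← hω]
  refine ⟨fun h p q => h _, fun h v => ?_⟩
  simpa using h (fun i => v.1 i * ↑(a i)⁻¹) (fun i => v.2 i * ↑(b i)⁻¹)

end SymmetricFunctional

end Variation

/-- The product of commutators `(x, y) ↦ ⁅x₁, y₁⁆ ⋯ ⁅x_g, y_g⁆`, extended to all tuples of elements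
of a ring by means of `Ring.inverse`. -/
noncomputable def commutatorProd (g : ℕ) (R : Type*) [Ring R]
    (p : (Fin g → R) × (Fin g → R)) : R :=
  (List.ofFn fun i => p.1 i * p.2 i * Ring.inverse (p.1 i) * Ring.inverse (p.2 i)).prod

lemma exists_hasLogFDerivAt_commutatorProd {𝕜 R : Type*} [NontriviallyNormedField 𝕜] [NormedRing R]
    [NormedAlgebra 𝕜 R] [HasSummableGeomSeries R] {g : ℕ} (a b : Fin g → Rˣ) :
    ∃ ω : (Fin g → R) × (Fin g → R) →L[𝕜] R,
      HasLogFDerivAt (commutatorProd g R) ω (List.ofFn fun i => ⁅a i, b i⁆).prod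
        (fun i => ↑(a i), fun i => ↑(b i)) ∧
      ∀ p q, ω (fun i => p i * a i, fun i => q i * b i) = commutatorProdVariation a b p q := by
  let x : (Fin g → R) × (Fin g → R) := (fun i => ↑(a i), fun i => ↑(b i))
  have ha (i : Fin g) := HasLogFDerivAt.of_hasFDerivAt (u := a i) (x := x)
    (ContinuousLinearMap.proj (R := 𝕜) (φ := fun _ : Fin g => R) i ∘L
      ContinuousLinearMap.fst 𝕜 (Fin g → R) (Fin g → R)).hasFDerivAt rfl
  have hb (i : Fin g) := HasLogFDerivAt.of_hasFDerivAt (u := b i) (x := x)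
    (ContinuousLinearMap.proj (R := 𝕜) (φ := fun _ : Fin g => R) i ∘L
      ContinuousLinearMap.snd 𝕜 (Fin g → R) (Fin g → R)).hasFDerivAt rfl
  refine ⟨_, HasLogFDerivAt.prod_ofFn fun i => (ha i).commutator (hb i), fun p q => ?_⟩
  simp [commutatorProdVariation, commutatorVariation, mul_add, mul_sub, add_mul, sub_mul, mul_assoc]

section TraceForm

variable {ι K : Type*} [Fintype ι] [Field K]

open Matrix

lemma mem_iff_forall_trace_mul_eq_zero {L : Submodule K (Matrix ι ι K)} {M : Matrix ι ι K} :
    M ∈ L ↔ ∀ X, (∀ N ∈ L, trace (X * N) = 0) → trace (X * M) = 0 := by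
  let B : LinearMap.BilinForm K (Matrix ι ι K) :=
    (LinearMap.mul K (Matrix ι ι K)).compr₂ (traceLinearMap ι K K)
  have hsymm : B.IsSymm := ⟨fun X Y => trace_mul_comm X Y⟩
  have hB : B.Nondegenerate := hsymm.isRefl.nondegenerate_iff_separatingLeft.2 fun X hX =>
    ext_iff_trace_mul_right.2 fun Y => (hX Y).trans (by simp)
  have hmem (L' : Submodule K (Matrix ι ι K)) (X : Matrix ι ι K) :
      X ∈ B.orthogonal L' ↔ ∀ N ∈ L', trace (X * N) = 0 := by
    simp only [trace_mul_comm X]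
    rfl
  nth_rw 1 [← LinearMap.BilinForm.orthogonal_orthogonal hB hsymm.isRefl L]
  rw [LinearMap.BilinForm.mem_orthogonal_iff]
  simp only [hmem]
  rfl

end TraceForm

section Representation

variable {G K V : Type*} [Group G] [Field K] [AddCommGroup V] [Module K V]
  {ρ : Representation K G V} {z : G} {ζ : K}

lemma pow_finrank_subrepresentation_eq_one (W : Subrepresentation ρ) (hz : z ∈ commutator G)
    (hρz : ρ z = ζ • 1) : ζ ^ Module.finrank K W.toSubmodule = 1 := by
  let χ : G →* Kˣ := MonoidHom.toHomUnits (LinearMap.det.comp W.toRepresentation)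
  have hWz : W.toRepresentation z = ζ • 1 := by
    ext w
    exact congr($hρz w)
  have hχz : χ z = 1 := Abelianization.commutator_subset_ker χ hz
  have hdet : LinearMap.det (W.toRepresentation z) = 1 := congr(($hχz : K))
  simpa [hWz, LinearMap.det_smul] using hdet

lemma isIrreducible_of_isPrimitiveRoot [FiniteDimensional K V] [Nontrivial V]
    (hz : z ∈ commutator G) (hρz : ρ z = ζ • 1)
    (hζ : IsPrimitiveRoot ζ (Module.finrank K V)) : ρ.IsIrreducible where
  exists_pair_ne := ⟨⊥, ⊤, fun h => bot_ne_top (α := Submodule K V) congr(($h).toSubmodule)⟩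
  eq_bot_or_eq_top W := by
    have hdvd : Module.finrank K V ∣ Module.finrank K W.toSubmodule :=
      hζ.dvd_of_pow_eq_one _ (pow_finrank_subrepresentation_eq_one W hz hρz)
    rcases (Module.finrank K W.toSubmodule).eq_zero_or_pos with hW | hW
    · left
      exact Subrepresentation.toSubmodule_injective (Submodule.finrank_eq_zero.1 hW)
    · right
      exact Subrepresentation.toSubmodule_injective <| Submodule.eq_top_of_finrank_eq <|
        (Submodule.finrank_le _).antisymm (Nat.le_of_dvd hW hdvd)

lemma exists_eq_smul_one_of_commute [IsAlgClosed K] [FiniteDimensional K V] [ρ.IsIrreducible]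
    {X : Module.End K V} (hX : ∀ s, Commute X (ρ s)) : ∃ c : K, X = c • 1 := by
  let φ : ρ.IntertwiningMap ρ := ⟨X, fun s => (hX s).eq⟩
  obtain ⟨c, hc⟩ :=
    Representation.IsIrreducible.algebraMap_intertwiningMap_bijective_of_isAlgClosed.2 φ
  refine ⟨c, LinearMap.ext fun v => ?_⟩
  exact congr($hc.symm v)

end Representation

lemma exists_eq_smul_one_of_mem_commutator_unitsCentralizer {ι K : Type*} [Fintype ι]
    [DecidableEq ι] [Nonempty ι] [Field K] [IsAlgClosed K] {X : Matrix ι ι K}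
    {z : (Matrix ι ι K)ˣ} {ζ : K} (hz : z ∈ ⁅unitsCentralizer X, unitsCentralizer X⁆)
    (hzζ : (z : Matrix ι ι K) = ζ • 1) (hζ : IsPrimitiveRoot ζ (Fintype.card ι)) :
    ∃ c : K, X = c • 1 := by
  let S := unitsCentralizer X
  let toEnd := Matrix.toLinAlgEquiv' (R := K) (n := ι)
  let ρ : Representation K S (ι → K) :=
    (toEnd : Matrix ι ι K →* Module.End K (ι → K)).comp ((Units.coeHom _).comp S.subtype)
  rw [← Subgroup.map_subtype_commutator] at hz
  obtain ⟨s, hs, rfl⟩ := hz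
  have hρs : ρ s = ζ • 1 := by
    rw [← map_one toEnd, ← map_smul, ← hzζ]
    rfl
  have : ρ.IsIrreducible := isIrreducible_of_isPrimitiveRoot hs hρs (by simpa using hζ)
  obtain ⟨c, hc⟩ := exists_eq_smul_one_of_commute (ρ := ρ) (X := toEnd X) fun t =>
    (mem_unitsCentralizer.1 t.2).map toEnd
  exact ⟨c, toEnd.injective <| by rw [hc, map_smul, map_one]⟩

section MuMap

lemma muMap_eq_commutatorProd (n g : ℕ) :
    muMap n g = commutatorProd g (Matrix (Fin n) (Fin n) ℂ) := by
  ext1 p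
  simp only [commutatorProd, ← Matrix.nonsing_inv_eq_ringInverse]
  rfl

variable {n g : ℕ} (a b : Fin g → (Matrix (Fin n) (Fin n) ℂ)ˣ)

lemma exists_hasLogFDerivAt_muMap :
    ∃ ω, HasLogFDerivAt (𝕜 := ℂ) (muMap n g) ω (List.ofFn fun i => ⁅a i, b i⁆).prod
        (fun i => ↑(a i), fun i => ↑(b i)) ∧
      ∀ p q, ω (fun i => p i * a i, fun i => q i * b i) = commutatorProdVariation a b p q := by
  have : CompleteSpace (Matrix (Fin n) (Fin n) ℂ) := FiniteDimensional.complete ℂ _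
  rw [muMap_eq_commutatorProd]
  exact exists_hasLogFDerivAt_commutatorProd a b

lemma coe_prod_ofFn_commutator :
    ((List.ofFn fun i => ⁅a i, b i⁆).prod : (Matrix (Fin n) (Fin n) ℂ)ˣ) =
      muMap n g (fun i => ↑(a i), fun i => ↑(b i)) := by
  obtain ⟨ω, hω, -⟩ := exists_hasLogFDerivAt_muMap a b
  exact hω.1.symm

theorem mem_range_fderiv_muMap_iff {M : Matrix (Fin n) (Fin n) ℂ} :
    M ∈ Set.range (fderiv ℂ (muMap n g) (fun i => ↑(a i), fun i => ↑(b i))) ↔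
      ∀ X : Matrix (Fin n) (Fin n) ℂ,
        (∀ i, a i ∈ unitsCentralizer X ∧ b i ∈ unitsCentralizer X) →
          Matrix.trace (X * (M * (muMap n g (fun i => ↑(a i), fun i => ↑(b i)))⁻¹)) = 0 := by
  obtain ⟨ω, hω, hωab⟩ := exists_hasLogFDerivAt_muMap a b
  have annihilator_range (X : Matrix (Fin n) (Fin n) ℂ) :
      (∀ N ∈ LinearMap.range ω.toLinearMap, Matrix.trace (X * N) = 0) ↔
        ∀ i, a i ∈ unitsCentralizer X ∧ b i ∈ unitsCentralizer X :=
    Set.forall_mem_range.trans <| forall_map_mul_eq_zero_iff_of_eq_commutatorProdVariation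
      (τ := Matrix.traceAddMonoidHom (Fin n) ℂ) Matrix.trace_mul_comm
      (fun x hx => Matrix.ext_iff_trace_mul_right.2 fun y => (hx y).trans (by simp)) hωab
  have fderiv_eq (v) : fderiv ℂ (muMap n g) (fun i => ↑(a i), fun i => ↑(b i)) v =
      ω v * ((List.ofFn fun i => ⁅a i, b i⁆).prod : (Matrix (Fin n) (Fin n) ℂ)ˣ) :=
    hω.fderiv_apply v
  simp only [← annihilator_range]
  rw [← mem_iff_forall_trace_mul_eq_zero, ← coe_prod_ofFn_commutator, ← Matrix.coe_units_inv]
  simp only [Set.mem_range, LinearMap.mem_range, fderiv_eq, ContinuousLinearMap.coe_coe,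
    Units.eq_mul_inv_iff_mul_eq]

end MuMap

/-- Let `n ≥ 1`, `g ≥ 1`, and `ζ ∈ ℂ` a primitive `n`-th root of unity.
At a point `s = (A,B)` of the open set of `2g`-tuples of invertible matrices with
`μ(s) = ζ·Iₙ`, the map `μ` is differentiable and the range of its (Fréchet) derivative is
exactly `{M : tr(ζ⁻¹·M) = 0}`, the tangent space of `SL(n,ℂ)` at `ζ·Iₙ`. -/
theorem statement9 (n g : ℕ) (hn : 1 ≤ n) (hg : 1 ≤ g)
    (ζ : ℂ) (hζ : IsPrimitiveRoot ζ n)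
    (A B : Fin g → Matrix (Fin n) (Fin n) ℂ)
    (hA : ∀ i, IsUnit (A i)) (hB : ∀ i, IsUnit (B i))
    (hμ : muMap n g (A, B) = ζ • (1 : Matrix (Fin n) (Fin n) ℂ)) :
    DifferentiableAt ℂ (muMap n g) (A, B) ∧
    Set.range (fderiv ℂ (muMap n g) (A, B))
      = {M : Matrix (Fin n) (Fin n) ℂ | Matrix.trace (ζ⁻¹ • M) = 0} := by
  lift A to Fin g → (Matrix (Fin n) (Fin n) ℂ)ˣ using hA
  lift B to Fin g → (Matrix (Fin n) (Fin n) ℂ)ˣ using hB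
  obtain ⟨ω, hω, -⟩ := exists_hasLogFDerivAt_muMap A B
  have hinv : (ζ • 1 : Matrix (Fin n) (Fin n) ℂ)⁻¹ = ζ⁻¹ • 1 :=
    Matrix.inv_eq_right_inv <| by simp [smul_smul, hζ.ne_zero (by omega)]
  refine ⟨hω.2.differentiableAt, Set.ext fun M => ?_⟩
  rw [mem_range_fderiv_muMap_iff, hμ, hinv, Set.mem_ofPred_eq]
  simp only [mul_smul_comm, mul_one]
  constructor
  · intro h
    simpa using h 1 fun i => by simp [mem_unitsCentralizer]
  · intro hM X hX
    have : Nonempty (Fin n) := ⟨⟨0, hn⟩⟩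
    obtain ⟨c, rfl⟩ := exists_eq_smul_one_of_mem_commutator_unitsCentralizer
      (prod_ofFn_commutator_mem hX) ((coe_prod_ofFn_commutator A B).trans hμ) (by simpa using hζ)
    rw [smul_one_mul, smul_comm, Matrix.trace_smul, hM, smul_zero]
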